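/- arXiv:1903.03088 — 4 statements merged into one kernel-verified Lean document; each statement's English description precedes it below -/
import Mathlib

section
/- Let X ∈ ℝ^{N×D} have singular value decomposition X = U D Vᵀ, where U ∈ ℝ^{N×D} satisfies UᵀU = I, V ∈ ℝ^{D×D} is orthogonal, and D ∈ ℝ^{D×D} is diagonal with diagonal entries d₁ ≥ … ≥ d_D > 0; let t ∈ ℝᴺ. Set Q₀ = Vᵀ ∈ ℝ^{D×D}, s₀ = D⁻¹Uᵀt ∈ ℝᴰ, v = −𝟙 ∈ ℝᴰ (the all-minus-ones vector), and c ∈ ℝᴰ with cᵢ = 2·ln(dᵢ). Define Q*(λ) = diag(σ(λ·v + c)) · Q₀, where σ is the logistic sigmoid applied entrywise, and s*(λ) = s₀. Then for every λ ∈ ℝ, Q*(λ)ᵀ s*(λ) = (XᵀX + exp(λ)·I)⁻¹ Xᵀ t. -/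
/-! With `X = U D Vᵀ` one has `XᵀX + exp(λ) I = V diag(dᵢ² + exp λ) Vᵀ`, whose inverse is
`V diag((dᵢ² + exp λ)⁻¹) Vᵀ` because `V` is orthogonal and the diagonal entries are positive
(`ridge_inv`). Applied to `Xᵀ = V D Uᵀ` this gives `V diag(dᵢ / (dᵢ² + exp λ)) Uᵀ`, while the gated
network is `V diag(σ(-λ + 2 ln dᵢ) / dᵢ) Uᵀ`. The two agree since
`σ(-λ + 2 ln dᵢ) = dᵢ² / (dᵢ² + exp λ)` (`logisticSigmoid_gate`). -/

open Matrix

/-- The logistic sigmoid `σ(z) = 1/(1 + exp(−z))`. -/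
noncomputable def logisticSigmoid (z : ℝ) : ℝ := 1 / (1 + Real.exp (-z))

theorem logisticSigmoid_gate (lam : ℝ) {x : ℝ} (hx : 0 < x) :
    logisticSigmoid (lam * (-1) + 2 * Real.log x) = x ^ 2 / (x ^ 2 + Real.exp lam) := by
  have h : Real.exp (-(lam * (-1) + 2 * Real.log x)) = Real.exp lam / x ^ 2 := by
    rw [show -(lam * (-1) + 2 * Real.log x) = lam - (Real.log x + Real.log x) by ring,
      Real.exp_sub, Real.exp_add, Real.exp_log hx, sq]
  have he := Real.exp_pos lam
  rw [logisticSigmoid, h]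
  field_simp

/-- The inverse of the ridge normal matrix in the right-singular basis. -/
theorem ridge_inv {N D : ℕ} (U : Matrix (Fin N) (Fin D) ℝ) (V : Matrix (Fin D) (Fin D) ℝ)
    (d : Fin D → ℝ) (hU : Uᵀ * U = 1) (hV₁ : Vᵀ * V = 1) (hV₂ : V * Vᵀ = 1)
    {a : ℝ} (ha : 0 < a) :
    ((U * diagonal d * Vᵀ)ᵀ * (U * diagonal d * Vᵀ) + a • (1 : Matrix (Fin D) (Fin D) ℝ))⁻¹
      = V * diagonal (fun i => (d i ^ 2 + a)⁻¹) * Vᵀ := by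
  have hgram : (U * diagonal d * Vᵀ)ᵀ * (U * diagonal d * Vᵀ) + a • (1 : Matrix (Fin D) (Fin D) ℝ)
      = V * diagonal (fun i => d i ^ 2 + a) * Vᵀ := by
    have h1 : (U * diagonal d * Vᵀ)ᵀ * (U * diagonal d * Vᵀ)
        = V * (diagonal d * (Uᵀ * U) * diagonal d) * Vᵀ := by
      simp only [transpose_mul, transpose_transpose, diagonal_transpose, Matrix.mul_assoc]
    have h2 : diagonal (fun i => d i ^ 2 + a)
        = diagonal d * diagonal d + a • (1 : Matrix (Fin D) (Fin D) ℝ) := by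
      rw [diagonal_mul_diagonal, smul_one_eq_diagonal, diagonal_add]
      simp only [sq]
    rw [h1, hU, Matrix.mul_one, h2, Matrix.mul_add, Matrix.add_mul, Matrix.mul_smul,
      Matrix.mul_one, Matrix.smul_mul, hV₂]
  rw [hgram]
  apply Matrix.inv_eq_right_inv
  have hdiag : diagonal (fun i => d i ^ 2 + a) * diagonal (fun i => (d i ^ 2 + a)⁻¹)
      = (1 : Matrix (Fin D) (Fin D) ℝ) := by
    rw [diagonal_mul_diagonal, ← diagonal_one]
    congr 1
    funext i
    exact mul_inv_cancel₀ (by positivity)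
  calc _ = V * (diagonal (fun i => d i ^ 2 + a) * (Vᵀ * V)
          * diagonal (fun i => (d i ^ 2 + a)⁻¹)) * Vᵀ := by simp only [Matrix.mul_assoc]
    _ = 1 := by rw [hV₁, Matrix.mul_one, hdiag, Matrix.mul_one, hV₂]

/-- Let `X = U D Vᵀ` be an SVD (`UᵀU = I`, `V` orthogonal, `D = diag(d)` with decreasing
positive entries) and `t ∈ ℝᴺ`. With `Q₀ = Vᵀ`, `s₀ = D⁻¹Uᵀt`, `v = −𝟙`, `cᵢ = 2 ln dᵢ`,
`Q*(λ) = diag(σ(λv + c))·Q₀`, `s*(λ) = s₀`, we have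
`Q*(λ)ᵀ s*(λ) = (XᵀX + exp(λ)·I)⁻¹ Xᵀ t` for every `λ`. -/
theorem sigmoidal_gating_best_response {N D : ℕ}
    (X U : Matrix (Fin N) (Fin D) ℝ) (V : Matrix (Fin D) (Fin D) ℝ) (d : Fin D → ℝ)
    (hX : X = U * Matrix.diagonal d * Vᵀ)
    (hU : Uᵀ * U = 1) (hV₁ : Vᵀ * V = 1) (hV₂ : V * Vᵀ = 1)
    (hd_pos : ∀ i, 0 < d i)
    (hd_mono : ∀ i j : Fin D, i ≤ j → d j ≤ d i)
    (t : Fin N → ℝ)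
    (Q₀ : Matrix (Fin D) (Fin D) ℝ) (hQ₀ : Q₀ = Vᵀ)
    (s₀ : Fin D → ℝ) (hs₀ : s₀ = (Matrix.diagonal d)⁻¹.mulVec (Uᵀ.mulVec t))
    (v : Fin D → ℝ) (hv : v = fun _ => (-1 : ℝ))
    (c : Fin D → ℝ) (hc : c = fun i => 2 * Real.log (d i))
    (Qstar : ℝ → Matrix (Fin D) (Fin D) ℝ)
    (hQstar : Qstar = fun lam =>
      Matrix.diagonal (fun i => logisticSigmoid (lam * v i + c i)) * Q₀)
    (sstar : ℝ → Fin D → ℝ) (hsstar : sstar = fun _ => s₀) :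
    ∀ lam : ℝ,
      (Qstar lam)ᵀ.mulVec (sstar lam)
        = (Xᵀ * X + Real.exp lam • (1 : Matrix (Fin D) (Fin D) ℝ))⁻¹.mulVec
            (Xᵀ.mulVec t) := by
  intro lam
  subst hX hQ₀ hs₀ hv hc hQstar hsstar
  have hinv : (diagonal d)⁻¹ = diagonal (fun i => (d i)⁻¹) := by
    apply Matrix.inv_eq_right_inv
    rw [diagonal_mul_diagonal, ← diagonal_one]
    congr 1
    funext i
    exact mul_inv_cancel₀ (hd_pos i).ne'
  have hdiag : diagonal (fun i => logisticSigmoid (lam * (-1) + 2 * Real.log (d i)))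
        * diagonal (fun i => (d i)⁻¹)
      = diagonal (fun i => (d i ^ 2 + Real.exp lam)⁻¹) * diagonal d := by
    rw [diagonal_mul_diagonal, diagonal_mul_diagonal]
    congr 1
    funext i
    have hi := hd_pos i
    have he := Real.exp_pos lam
    rw [logisticSigmoid_gate lam hi]
    field_simp
  rw [ridge_inv U V d hU hV₁ hV₂ (Real.exp_pos lam), hinv]
  simp only [mulVec_mulVec, transpose_mul, transpose_transpose, diagonal_transpose]
  congr 1
  calc _ = V * (diagonal (fun i => logisticSigmoid (lam * (-1) + 2 * Real.log (d i)))
          * diagonal (fun i => (d i)⁻¹)) * Uᵀ := by simp only [Matrix.mul_assoc]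
    _ = V * (diagonal (fun i => (d i ^ 2 + Real.exp lam)⁻¹) * (Vᵀ * V) * diagonal d) * Uᵀ := by
      rw [hdiag, hV₁, Matrix.mul_one]
    _ = _ := by simp only [Matrix.mul_assoc]
end

section
/- Let C ∈ ℝ^{m×m} be symmetric and invertible, B ∈ ℝ^{n×m}, e ∈ ℝᵐ, λ₀ ∈ ℝⁿ, and σ ≠ 0. Suppose U ∈ ℝ^{m×n} and b ∈ ℝᵐ satisfy the two stationarity equations b = −C⁻¹(C U λ₀ + Bᵀλ₀ + e) and C U (λ₀λ₀ᵀ + σ²·I) = −Bᵀλ₀λ₀ᵀ − σ²·Bᵀ − C b λ₀ᵀ − e λ₀ᵀ. Then U = −C⁻¹Bᵀ and b = −C⁻¹e. -/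
/-!
Multiplying the first equation by `C` gives `C b = -(C U λ₀ + Bᵀ λ₀ + e)`. Inserted into the second
equation, this cancels all terms containing `λ₀`, so `σ² C U = -σ² Bᵀ`, and hence `C U = -Bᵀ` because
`σ ≠ 0`. Inverting `C` yields `U`; the first equation then reduces to `b = -C⁻¹ e`.
-/

open Matrix

/-- If `C` is symmetric and invertible, `σ ≠ 0`, and `(U, b)` satisfies the two
stationarity equations
`b = −C⁻¹(CUλ₀ + Bᵀλ₀ + e)` and
`CU(λ₀λ₀ᵀ + σ²I) = −Bᵀλ₀λ₀ᵀ − σ²Bᵀ − Cbλ₀ᵀ − eλ₀ᵀ`,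
then `U = −C⁻¹Bᵀ` and `b = −C⁻¹e`. -/
theorem stationarity_solution {n m : ℕ}
    (C : Matrix (Fin m) (Fin m) ℝ) (hCsymm : C.IsSymm) (hCinv : IsUnit C)
    (B : Matrix (Fin n) (Fin m) ℝ) (e : Fin m → ℝ) (lam₀ : Fin n → ℝ)
    (σ : ℝ) (hσ : σ ≠ 0)
    (U : Matrix (Fin m) (Fin n) ℝ) (b : Fin m → ℝ)
    (h₁ : b = -(C⁻¹.mulVec (C.mulVec (U.mulVec lam₀) + Bᵀ.mulVec lam₀ + e)))
    (h₂ : C * U * (Matrix.vecMulVec lam₀ lam₀ + σ ^ 2 • (1 : Matrix (Fin n) (Fin n) ℝ))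
        = -(Bᵀ * Matrix.vecMulVec lam₀ lam₀) - σ ^ 2 • Bᵀ
          - Matrix.vecMulVec (C.mulVec b) lam₀ - Matrix.vecMulVec e lam₀) :
    U = -(C⁻¹ * Bᵀ) ∧ b = -(C⁻¹.mulVec e) := by
  have hdet : IsUnit C.det := (Matrix.isUnit_iff_isUnit_det C).1 hCinv
  have hCb : C *ᵥ b = -(C *ᵥ (U *ᵥ lam₀) + Bᵀ *ᵥ lam₀ + e) := by
    rw [h₁, mulVec_neg, mulVec_mulVec, mul_nonsing_inv C hdet, one_mulVec]
  -- Substituting `C b` cancels every rank-one term of `h₂`, leaving `σ² C U = -σ² Bᵀ`.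
  have hCU : C * U = -Bᵀ := by
    have h : σ ^ 2 • (C * U) = σ ^ 2 • (-Bᵀ) := by
      rw [hCb, neg_vecMulVec, add_vecMulVec, add_vecMulVec, mulVec_mulVec,
        ← mul_vecMulVec, ← mul_vecMulVec, Matrix.mul_add, Matrix.mul_smul,
        Matrix.mul_one] at h₂
      rw [smul_neg, ← sub_eq_zero]
      rw [← sub_eq_zero] at h₂
      rw [← h₂]
      abel
    exact smul_right_injective _ (pow_ne_zero 2 hσ) h
  constructor
  · rw [← Matrix.mul_neg, ← hCU, nonsing_inv_mul_cancel_left _ _ hdet]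
  · rw [h₁, mulVec_mulVec, hCU, neg_mulVec, neg_add_cancel, zero_add]
end

section
/- Let A ∈ ℝ^{n×n}, B ∈ ℝ^{n×m}, C ∈ ℝ^{m×m} symmetric positive definite, d ∈ ℝⁿ, e ∈ ℝᵐ, and define f(λ, θ) = ½·λᵀAλ + λᵀBθ + ½·θᵀCθ + dᵀλ + eᵀθ, with best-response function θ*(λ) = −C⁻¹(Bᵀλ + e). Fix λ₀ ∈ ℝⁿ and σ > 0, and let ε be a random vector in ℝⁿ with independent N(0, σ²) Gaussian coordinates. If (U*, b*) ∈ ℝ^{m×n} × ℝᵐ is a global minimizer of the function (U, b) ↦ E[f(λ₀ + ε, U(λ₀ + ε) + b)], then U* = −C⁻¹Bᵀ; that is, the Jacobian of the optimal affine approximation θ̂(λ) = U*λ + b* equals the Jacobian ∂θ*/∂λ(λ₀) of the exact best-response function at λ₀. -/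
/-!
Completing the square gives `f(λ, θ) = f(λ, θ*(λ)) + ½ (θ - θ*(λ))ᵀ C (θ - θ*(λ))`
(`quadObj_eq_add_sq`), and `θ*` is itself affine. Comparing a minimizer `(U*, b*)` with the
coefficients of `θ*` therefore shows that the expectation of the nonnegative quadratic gap is at
most `0`, so the gap vanishes almost surely. The Gaussian measure charges every nonempty open set
and the gap is continuous in `ε`, hence it vanishes identically; as `C` is positive definite, the
two affine maps agree everywhere and so do their linear parts. Subtracting expectations requires
integrability, which holds because the coordinates of an affine image of a Gaussian vector are
square integrable (`integrable_quadObj`).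
-/

open Matrix MeasureTheory ProbabilityTheory

/-- The quadratic lower-level objective
`f(λ, θ) = ½ λᵀAλ + λᵀBθ + ½ θᵀCθ + dᵀλ + eᵀθ`. -/
noncomputable def quadObj {n m : ℕ} (A : Matrix (Fin n) (Fin n) ℝ)
    (B : Matrix (Fin n) (Fin m) ℝ) (C : Matrix (Fin m) (Fin m) ℝ)
    (d : Fin n → ℝ) (e : Fin m → ℝ) (lam : Fin n → ℝ) (θ : Fin m → ℝ) : ℝ :=
  (1 / 2) * (lam ⬝ᵥ A.mulVec lam) + lam ⬝ᵥ B.mulVec θ + (1 / 2) * (θ ⬝ᵥ C.mulVec θ)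
    + d ⬝ᵥ lam + e ⬝ᵥ θ

/-- Completion of the square in `θ` around the best response. -/
lemma quadObj_eq_add_sq {n m : ℕ} (A : Matrix (Fin n) (Fin n) ℝ) (B : Matrix (Fin n) (Fin m) ℝ)
    (C : Matrix (Fin m) (Fin m) ℝ) (hC : C.PosDef) (d : Fin n → ℝ) (e : Fin m → ℝ)
    (lam : Fin n → ℝ) (θ t : Fin m → ℝ) (ht : C *ᵥ t = -(Bᵀ *ᵥ lam + e)) :
    quadObj A B C d e lam θ =
      quadObj A B C d e lam t + (1 / 2) * ((θ - t) ⬝ᵥ C *ᵥ (θ - t)) := by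
  have hsymm : ∀ x y : Fin m → ℝ, x ⬝ᵥ C *ᵥ y = y ⬝ᵥ C *ᵥ x := by
    intro x y
    have hT : Cᵀ = C := by simpa using hC.isHermitian.eq
    rw [dotProduct_mulVec, ← mulVec_transpose, hT, dotProduct_comm]
  have hB : ∀ x : Fin m → ℝ, lam ⬝ᵥ B *ᵥ x = x ⬝ᵥ Bᵀ *ᵥ lam := by
    intro x
    rw [dotProduct_mulVec, ← mulVec_transpose, dotProduct_comm]
  have hx : ∀ x : Fin m → ℝ, x ⬝ᵥ C *ᵥ t = -(x ⬝ᵥ Bᵀ *ᵥ lam + e ⬝ᵥ x) := by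
    intro x
    rw [ht, dotProduct_neg, dotProduct_add, dotProduct_comm x e]
  unfold quadObj
  rw [mulVec_sub, dotProduct_sub, sub_dotProduct, sub_dotProduct, hsymm t θ, hx θ, hx t, hB, hB]
  ring

section Integrability

variable {Ω : Type*} [MeasurableSpace Ω] {μ : Measure Ω}

lemma memLp_mulVec {k l : ℕ} (M : Matrix (Fin k) (Fin l) ℝ) {x : Ω → Fin l → ℝ}
    (hx : ∀ i, MemLp (fun ω => x ω i) 2 μ) (j : Fin k) :
    MemLp (fun ω => (M *ᵥ x ω) j) 2 μ := by
  simp only [mulVec, dotProduct]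
  exact memLp_finsetSum _ fun i _ => (hx i).const_mul (M j i)

lemma integrable_dotProduct {k : ℕ} {x y : Ω → Fin k → ℝ}
    (hx : ∀ i, MemLp (fun ω => x ω i) 2 μ) (hy : ∀ i, MemLp (fun ω => y ω i) 2 μ) :
    Integrable (fun ω => x ω ⬝ᵥ y ω) μ := by
  simp only [dotProduct]
  exact integrable_finsetSum _ fun i _ => (hx i).integrable_mul (hy i)

lemma integrable_quadObj [IsFiniteMeasure μ] {n m : ℕ}
    (A : Matrix (Fin n) (Fin n) ℝ) (B : Matrix (Fin n) (Fin m) ℝ)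
    (C : Matrix (Fin m) (Fin m) ℝ) (d : Fin n → ℝ) (e : Fin m → ℝ)
    {x : Ω → Fin n → ℝ} {y : Ω → Fin m → ℝ}
    (hx : ∀ i, MemLp (fun ω => x ω i) 2 μ) (hy : ∀ i, MemLp (fun ω => y ω i) 2 μ) :
    Integrable (fun ω => quadObj A B C d e (x ω) (y ω)) μ := by
  unfold quadObj
  exact (((((integrable_dotProduct hx (memLp_mulVec A hx)).const_mul _).add
    (integrable_dotProduct hx (memLp_mulVec B hy))).add
    ((integrable_dotProduct hy (memLp_mulVec C hy)).const_mul _)).add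
    (integrable_dotProduct (fun i => memLp_const (d i)) hx)).add
    (integrable_dotProduct (fun i => memLp_const (e i)) hy)

end Integrability

/-- For the quadratic objective with `C ≻ 0` and best-response `θ*(λ) = −C⁻¹(Bᵀλ + e)`:
if `(U*, b*)` globally minimizes the Gaussian-smoothed objective
`(U, b) ↦ E[f(λ₀ + ε, U(λ₀ + ε) + b)]` (with `ε ∼ N(0, σ²I)`, `σ > 0`), then
`U* = −C⁻¹Bᵀ`, which is the Jacobian `∂θ*/∂λ(λ₀)` of the exact best-response at `λ₀`. -/
theorem smoothed_minimizer_jacobian {n m : ℕ}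
    (A : Matrix (Fin n) (Fin n) ℝ) (B : Matrix (Fin n) (Fin m) ℝ)
    (C : Matrix (Fin m) (Fin m) ℝ) (hC : C.PosDef)
    (d : Fin n → ℝ) (e : Fin m → ℝ)
    (θstar : (Fin n → ℝ) → (Fin m → ℝ))
    (hθstar : θstar = fun lam => -(C⁻¹.mulVec (Bᵀ.mulVec lam + e)))
    (lam₀ : Fin n → ℝ) (σ : ℝ) (hσ : 0 < σ)
    (Ustar : Matrix (Fin m) (Fin n) ℝ) (bstar : Fin m → ℝ)
    (hmin : ∀ (U : Matrix (Fin m) (Fin n) ℝ) (b : Fin m → ℝ),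
      (∫ ε : Fin n → ℝ,
          quadObj A B C d e (lam₀ + ε) (Ustar.mulVec (lam₀ + ε) + bstar)
          ∂(Measure.pi fun _ : Fin n => gaussianReal 0 ⟨σ ^ 2, sq_nonneg σ⟩))
      ≤ (∫ ε : Fin n → ℝ,
          quadObj A B C d e (lam₀ + ε) (U.mulVec (lam₀ + ε) + b)
          ∂(Measure.pi fun _ : Fin n => gaussianReal 0 ⟨σ ^ 2, sq_nonneg σ⟩))) :
    Ustar = -(C⁻¹ * Bᵀ) ∧
    ∀ v : Fin n → ℝ, fderiv ℝ θstar lam₀ v = Ustar.mulVec v := by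
  -- Only `s ≠ 0` matters about the variance. Naming it as an element of `ℝ≥0` also keeps the
  -- anonymous-constructor form from obstructing instance search.
  obtain ⟨s, hs⟩ : ∃ s : NNReal, s = ⟨σ ^ 2, sq_nonneg σ⟩ := ⟨_, rfl⟩
  have hv : s ≠ 0 := by
    rintro rfl
    have h' : (0 : ℝ) = σ ^ 2 := congrArg NNReal.toReal hs
    exact (pow_pos hσ 2).ne h'
  rw [← hs] at hmin
  set μ := Measure.pi fun _ : Fin n => gaussianReal 0 s with hμ
  have : (gaussianReal 0 s).IsOpenPosMeasure :=
    (gaussianReal_absolutelyContinuous' 0 hv).isOpenPosMeasure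
  have hCC : C * C⁻¹ = 1 := mul_nonsing_inv C ((isUnit_iff_isUnit_det C).1 hC.isUnit)
  have hlam : ∀ i, MemLp (fun ε : Fin n → ℝ => (lam₀ + ε) i) 2 μ := by
    intro i
    have h : MemLp (fun ε : Fin n → ℝ => ε i) 2 μ :=
      (memLp_id_gaussianReal (μ := 0) (v := s) 2).comp_measurePreserving
        (measurePreserving_eval (fun _ : Fin n => gaussianReal 0 s) i)
    exact (memLp_const (lam₀ i)).add h
  have haff : ∀ (U : Matrix (Fin m) (Fin n) ℝ) (b : Fin m → ℝ) (j : Fin m),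
      MemLp (fun ε : Fin n → ℝ => (U *ᵥ (lam₀ + ε) + b) j) 2 μ := fun U b j =>
    (memLp_mulVec U hlam j).add (memLp_const (b j))
  set U₀ : Matrix (Fin m) (Fin n) ℝ := -(C⁻¹ * Bᵀ) with hU₀
  set b₀ : Fin m → ℝ := -(C⁻¹ *ᵥ e) with hb₀
  have hbest : ∀ lam : Fin n → ℝ, C *ᵥ (U₀ *ᵥ lam + b₀) = -(Bᵀ *ᵥ lam + e) := by
    intro lam
    rw [hU₀, hb₀, neg_mulVec, ← neg_add, ← mulVec_mulVec, ← mulVec_add, mulVec_neg,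
      mulVec_mulVec, hCC, one_mulVec]
  set w : (Fin n → ℝ) → Fin m → ℝ := fun ε =>
    (Ustar *ᵥ (lam₀ + ε) + bstar) - (U₀ *ᵥ (lam₀ + ε) + b₀) with hw
  set q : (Fin n → ℝ) → ℝ := fun ε => (1 / 2) * (w ε ⬝ᵥ C *ᵥ w ε) with hq
  have hwL : ∀ j, MemLp (fun ε => w ε j) 2 μ := fun j => (haff Ustar bstar j).sub (haff U₀ b₀ j)
  have hqi : Integrable q μ := (integrable_dotProduct hwL (memLp_mulVec C hwL)).const_mul _
  have hq0 : 0 ≤ q := by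
    intro ε
    have h := hC.posSemidef.dotProduct_mulVec_nonneg (w ε)
    simp only [star_trivial] at h
    simp only [hq, Pi.zero_apply]
    positivity
  have hint : ∫ ε, q ε ∂μ ≤ 0 := by
    have h := hmin U₀ b₀
    simp_rw [fun ε : Fin n → ℝ => quadObj_eq_add_sq A B C hC d e (lam₀ + ε)
      (Ustar *ᵥ (lam₀ + ε) + bstar) _ (hbest (lam₀ + ε))] at h
    have h2 := integral_add (integrable_quadObj A B C d e hlam (haff U₀ b₀)) hqi
    simp only [hq, hw] at h2 ⊢
    linarith
  have hqc : Continuous q := by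
    simp only [hq, hw]
    fun_prop
  have hqz : q = 0 := by
    have h := (integral_eq_zero_iff_of_nonneg hq0 hqi).1 (le_antisymm hint (integral_nonneg hq0))
    exact (hqc.ae_eq_iff_eq μ continuous_zero).1 h
  have hwz : ∀ ε, w ε = 0 := by
    intro ε
    by_contra hne
    have h := hC.dotProduct_mulVec_pos hne
    have h' : (1 / 2) * (w ε ⬝ᵥ C *ᵥ w ε) = 0 := congrFun hqz ε
    simp only [star_trivial] at h
    linarith
  have hU : Ustar = U₀ := by
    apply ext_of_mulVec_single
    intro i
    -- Evaluating the affine identity at `λ = eᵢ` and at `λ = 0` isolates column `i`.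
    have h1 := hwz (Pi.single i 1 - lam₀)
    have h0 := hwz (-lam₀)
    simp only [hw, add_sub_cancel, add_neg_cancel, mulVec_zero, zero_add] at h1 h0
    rw [sub_eq_zero] at h1 h0
    rw [h0] at h1
    exact add_right_cancel h1
  refine ⟨hU, fun v => ?_⟩
  have hθ : θstar = fun lam => (Matrix.mulVecLin U₀).toContinuousLinearMap lam + b₀ := by
    rw [hθstar]
    funext lam
    change -(C⁻¹ *ᵥ (Bᵀ *ᵥ lam + e)) = U₀ *ᵥ lam + b₀
    rw [hU₀, hb₀, neg_mulVec, ← neg_add, ← mulVec_mulVec, ← mulVec_add]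
  rw [hθ, fderiv_add_const, ContinuousLinearMap.fderiv, hU]
  simp
end

section
/- Let A ∈ ℝ^{n×n}, B ∈ ℝ^{n×m}, C ∈ ℝ^{m×m} symmetric positive definite, d ∈ ℝⁿ, e ∈ ℝᵐ, and define f(λ, θ) = ½·λᵀAλ + λᵀBθ + ½·θᵀCθ + dᵀλ + eᵀθ, with best-response function θ*(λ) = −C⁻¹(Bᵀλ + e). Fix λ₀ ∈ ℝⁿ and σ > 0, and let ε be a random vector in ℝⁿ with independent N(0, σ²) Gaussian coordinates. If (U*, b*) is a global minimizer of (U, b) ↦ E[f(λ₀ + ε, U(λ₀ + ε) + b)], then b* = −C⁻¹e = θ*(λ₀) − (−C⁻¹Bᵀ)·λ₀; consequently the optimal affine approximation satisfies U*λ + b* = θ*(λ) for all λ ∈ ℝⁿ, i.e. it coincides with the first-order Taylor expansion of θ* about λ₀ and hence with θ* itself. -/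
/-!
Completing the square in `θ` gives
`f(λ, θ) = f(λ, θ*(λ)) + ½ (θ - θ*(λ))ᵀ C (θ - θ*(λ))` (`quadObj_eq_add`). The best response is
itself affine, hence an admissible competitor, so at a minimizer the nonnegative function
`ε ↦ (θ̂ - θ*)ᵀ C (θ̂ - θ*)`, evaluated at `λ₀ + ε`, has expectation at most zero. It therefore
vanishes almost everywhere, and being continuous it vanishes everywhere, because the Gaussian
product measure charges every nonempty open set. Positive definiteness of `C` then gives
`θ̂ = θ*`, and evaluation at `λ = 0` identifies the bias. All integrals involved are genuine,
since Gaussian coordinates are square integrable (`integrable_quadObj`).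
-/

open Matrix MeasureTheory ProbabilityTheory

/-- Completing the square around a point `t` that is stationary for `f(λ, ·)`. -/
lemma quadObj_eq_add {n m : ℕ} (A : Matrix (Fin n) (Fin n) ℝ)
    (B : Matrix (Fin n) (Fin m) ℝ) (C : Matrix (Fin m) (Fin m) ℝ) (hC : Cᵀ = C)
    (d : Fin n → ℝ) (e : Fin m → ℝ) (lam : Fin n → ℝ) (θ t : Fin m → ℝ)
    (ht : C *ᵥ t = -(Bᵀ *ᵥ lam + e)) :
    quadObj A B C d e lam θ
      = quadObj A B C d e lam t + (1 / 2) * ((θ - t) ⬝ᵥ C *ᵥ (θ - t)) := by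
  have hB : ∀ x, lam ⬝ᵥ B *ᵥ x = x ⬝ᵥ Bᵀ *ᵥ lam := fun x => by
    rw [dotProduct_mulVec, ← mulVec_transpose, dotProduct_comm]
  have hsymm : t ⬝ᵥ C *ᵥ θ = θ ⬝ᵥ C *ᵥ t := by
    rw [dotProduct_mulVec, ← mulVec_transpose, hC, dotProduct_comm]
  have h1 : θ ⬝ᵥ C *ᵥ t = -(θ ⬝ᵥ Bᵀ *ᵥ lam + e ⬝ᵥ θ) := by
    rw [ht, dotProduct_neg, dotProduct_add, dotProduct_comm θ e]
  have h2 : t ⬝ᵥ C *ᵥ t = -(t ⬝ᵥ Bᵀ *ᵥ lam + e ⬝ᵥ t) := by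
    rw [ht, dotProduct_neg, dotProduct_add, dotProduct_comm t e]
  simp only [quadObj, hB, mulVec_sub, dotProduct_sub, sub_dotProduct, hsymm]
  linarith

lemma isOpenPosMeasure_gaussianReal (μ : ℝ) {v : NNReal} (hv : v ≠ 0) :
    (gaussianReal μ v).IsOpenPosMeasure :=
  (gaussianReal_absolutelyContinuous' μ hv).isOpenPosMeasure

/-- For the quadratic objective with `C ≻ 0` and best-response `θ*(λ) = −C⁻¹(Bᵀλ + e)`:
if `(U*, b*)` globally minimizes the Gaussian-smoothed objective
`(U, b) ↦ E[f(λ₀ + ε, U(λ₀ + ε) + b)]` (with `ε ∼ N(0, σ²I)`, `σ > 0`), then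
`b* = −C⁻¹e = θ*(λ₀) − (−C⁻¹Bᵀ)λ₀`, and the optimal affine approximation coincides with
the exact best-response: `U*λ + b* = θ*(λ)` for all `λ`. -/
theorem smoothed_minimizer_bias {n m : ℕ}
    (A : Matrix (Fin n) (Fin n) ℝ) (B : Matrix (Fin n) (Fin m) ℝ)
    (C : Matrix (Fin m) (Fin m) ℝ) (hC : C.PosDef)
    (d : Fin n → ℝ) (e : Fin m → ℝ)
    (θstar : (Fin n → ℝ) → (Fin m → ℝ))
    (hθstar : θstar = fun lam => -(C⁻¹.mulVec (Bᵀ.mulVec lam + e)))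
    (lam₀ : Fin n → ℝ) (σ : ℝ) (hσ : 0 < σ)
    (Ustar : Matrix (Fin m) (Fin n) ℝ) (bstar : Fin m → ℝ)
    (hmin : ∀ (U : Matrix (Fin m) (Fin n) ℝ) (b : Fin m → ℝ),
      (∫ ε : Fin n → ℝ,
          quadObj A B C d e (lam₀ + ε) (Ustar.mulVec (lam₀ + ε) + bstar)
          ∂(Measure.pi fun _ : Fin n => gaussianReal 0 ⟨σ ^ 2, sq_nonneg σ⟩))
      ≤ (∫ ε : Fin n → ℝ,
          quadObj A B C d e (lam₀ + ε) (U.mulVec (lam₀ + ε) + b)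
          ∂(Measure.pi fun _ : Fin n => gaussianReal 0 ⟨σ ^ 2, sq_nonneg σ⟩))) :
    bstar = -(C⁻¹.mulVec e) ∧
    bstar = θstar lam₀ - (-(C⁻¹ * Bᵀ)).mulVec lam₀ ∧
    ∀ lam : Fin n → ℝ, Ustar.mulVec lam + bstar = θstar lam := by
  have hdet : IsUnit C.det := hC.det_pos.ne'.isUnit
  have hCT : Cᵀ = C := by rw [← conjTranspose_eq_transpose_of_trivial]; exact hC.isHermitian
  have hθ : ∀ lam, θstar lam = (-(C⁻¹ * Bᵀ)) *ᵥ lam + -(C⁻¹ *ᵥ e) := fun lam => by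
    simp only [hθstar, mulVec_add, neg_mulVec, mulVec_mulVec, neg_add]
  have hst : ∀ lam, C *ᵥ θstar lam = -(Bᵀ *ᵥ lam + e) := fun lam => by
    simp only [hθstar, mulVec_neg, mulVec_mulVec, mul_nonsing_inv C hdet, one_mulVec]
  -- The anonymous constructor has the subtype rather than `NNReal` as its type, which hides it
  -- from instance search; only `v ≠ 0` is needed of the variance, so a variable replaces it.
  obtain ⟨v, hv, hvσ⟩ : ∃ v : NNReal, v ≠ 0 ∧ ⟨σ ^ 2, sq_nonneg σ⟩ = v :=
    ⟨⟨σ ^ 2, sq_nonneg σ⟩, fun h => (pow_pos hσ 2).ne' (congrArg NNReal.toReal h), rfl⟩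
  rw [hvσ] at hmin
  set μ : Measure (Fin n → ℝ) := Measure.pi fun _ : Fin n => gaussianReal 0 v with hμ
  have := isOpenPosMeasure_gaussianReal 0 hv
  have : μ.IsOpenPosMeasure := by rw [hμ]; infer_instance
  have : IsProbabilityMeasure μ := by rw [hμ]; infer_instance
  have hx : ∀ i, MemLp (fun ε : Fin n → ℝ => (lam₀ + ε) i) 2 μ := fun i =>
    (memLp_const (lam₀ i)).add
      ((memLp_id_gaussianReal 2).comp_measurePreserving (measurePreserving_eval _ i))
  have hy : ∀ (U : Matrix (Fin m) (Fin n) ℝ) (b : Fin m → ℝ) (j : Fin m),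
      MemLp (fun ε : Fin n → ℝ => (U *ᵥ (lam₀ + ε) + b) j) 2 μ := fun U b j =>
    (memLp_mulVec U hx j).add (memLp_const (b j))
  -- `g` is the excess of the objective over its minimum in `θ`.
  set g : (Fin n → ℝ) → ℝ := fun ε =>
    (1 / 2) * ((Ustar *ᵥ (lam₀ + ε) + bstar - θstar (lam₀ + ε)) ⬝ᵥ
      C *ᵥ (Ustar *ᵥ (lam₀ + ε) + bstar - θstar (lam₀ + ε))) with hg
  have hpos : ∀ x : Fin m → ℝ, x ≠ 0 → 0 < x ⬝ᵥ C *ᵥ x := fun x hx0 => by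
    simpa using hC.dotProduct_mulVec_pos hx0
  have hg0 : 0 ≤ g := fun ε => by
    rcases eq_or_ne (Ustar *ᵥ (lam₀ + ε) + bstar - θstar (lam₀ + ε)) 0 with h | h
    · simp [hg, h]
    · exact (mul_pos one_half_pos (hpos _ h)).le
  have hθy : ∀ j, MemLp (fun ε : Fin n → ℝ => θstar (lam₀ + ε) j) 2 μ := by
    simp only [hθ]; exact hy _ _
  have hgi : Integrable g μ :=
    (integrable_dotProduct (fun j => (hy Ustar bstar j).sub (hθy j))
      (memLp_mulVec C fun j => (hy Ustar bstar j).sub (hθy j))).const_mul _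
  have hgc : Continuous g := by
    simp only [hg, hθ]; fun_prop
  have hle : ∫ ε, g ε ∂μ ≤ 0 := by
    have h := hmin (-(C⁻¹ * Bᵀ)) (-(C⁻¹ *ᵥ e))
    simp only [← hθ] at h
    simp only [quadObj_eq_add A B C hCT d e _ (Ustar *ᵥ _ + bstar) _ (hst _)] at h
    rw [integral_add (integrable_quadObj A B C d e hx hθy) hgi] at h
    linarith
  have hae : g =ᵐ[μ] 0 :=
    (integral_eq_zero_iff_of_nonneg hg0 hgi).1 (le_antisymm hle (integral_nonneg hg0))
  have hgz : g = 0 := (hgc.ae_eq_iff_eq μ continuous_const).1 hae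
  have hmain : ∀ lam : Fin n → ℝ, Ustar *ᵥ lam + bstar = θstar lam := fun lam => by
    by_contra hne
    have h := congrFun hgz (lam - lam₀)
    simp only [hg, add_sub_cancel, Pi.zero_apply] at h
    linarith [hpos _ (sub_ne_zero.2 hne)]
  have hb : bstar = -(C⁻¹ *ᵥ e) := by simpa [hθ] using hmain 0
  exact ⟨hb, by rw [hθ, add_sub_cancel_left, hb], hmain⟩
end
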